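/- Let I, k ∈ ℕ₊, let d ∈ ℕ with d ≥ 2, let j ∈ ℤ^d, and define 𝒩_{k,j:I} : ℝ^d → ℝ by 𝒩_{k,j:I}(x) := ∏_{i=1}^d 𝒩_I(2^k x_i − j_i). Then there exists a Res-KAN N̂_{k,j:I} : ℝ^d → ℝ with spline-order parameter I (whose coefficient matrices satisfy the sparsity rule for every α with ⌈α⌉ ≤ I), having width at most d+4, depth 2d−1, and at most d² + 35d − 36 nonzero parameters, such that N̂_{k,j:I}(x) = 𝒩_{k,j:I}(x) for every x ∈ ℝ^d. Moreover, the networks can be chosen so that all layer parameters other than the weight matrix and bias of the first affine map (at most 2d nonzero entries) are independent of k and j. -/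

import Mathlib

/-!
Put `d = n + 1`. The first layer evaluates all `d` factors. From then on a hidden state lies in
`ℝ ^ (n + 4)`: it holds the factors still to be used and a four-coordinate accumulator `a`, which
encodes the partial product `p = a 0 + a 1 - a 2 - a 3`, initially the last factor.

Since `t² = ReLU(t)² + ReLU(-t)²`, polarization gives
`4 * p * y = ReLU(p + y)² + ReLU(-p - y)² - ReLU(p - y)² - ReLU(-p + y)²`,
so four `ReLU²` neurons turn the accumulator of `p` into one of `p * y`. The signed sum is never
formed: it is absorbed into the next affine map, so a multiplication costs a single layer, while
skip connections carry the factors still to be used. After `n` multiplications the remaining `n`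
layers only copy the accumulator, and the affine head takes its signed sum.

The layers have at most `3(n + 1)`, `n + 23` and `4` nonzero parameters respectively and the head
has `4`, in total `n² + 30n + 7 = d² + 28d - 22`.
-/

open MeasureTheory Filter Set
open scoped BigOperators ENNReal NNReal

noncomputable section

/-- ReLU activation. -/
def relu (t : ℝ) : ℝ := max t 0

/-- Cardinal B-spline of order `I` (with the indicator convention for `I = 0`). -/
def cardBSpline (I : ℕ) (x : ℝ) : ℝ :=
  if I = 0 then (if 0 ≤ x ∧ x < 1 then 1 else 0)
  else ∑ j ∈ Finset.range (I + 2),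
    ((-1 : ℝ) ^ j * ((I + 1).choose j : ℝ) / (Nat.factorial I : ℝ)) * (relu (x - j)) ^ I

/-- The dictionary `{𝒩_0, …, 𝒩_I, ReLU, ReLU²}` indexed by `Fin (I+3)`. -/
def kanBasis (I : ℕ) (i : Fin (I + 3)) : ℝ → ℝ :=
  if (i : ℕ) ≤ I then cardBSpline (i : ℕ)
  else if (i : ℕ) = I + 1 then relu
  else fun t => (relu t) ^ 2

/-- A Res-KAN layer with spline-order parameter `I`. -/
structure ResKANLayer (I din dout : ℕ) where
  A : Matrix (Fin dout) (Fin din) ℝ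
  b : Fin dout → ℝ
  G : Matrix (Fin dout) (Fin din) ℝ
  β : Matrix (Fin (I + 3)) (Fin dout) ℝ
  G_diag : ∀ (i : Fin dout) (j : Fin din), (i : ℕ) ≠ (j : ℕ) → G i j = 0

/-- The action of a Res-KAN layer: `x ↦ σ_β•(Ax + b) + Gx`. -/
def ResKANLayer.apply {I din dout : ℕ} (ℓ : ResKANLayer I din dout)
    (x : Fin din → ℝ) : Fin dout → ℝ := fun j =>
  (∑ i : Fin (I + 3), ℓ.β i j * kanBasis I i ((ℓ.A.mulVec x + ℓ.b) j)) + ℓ.G.mulVec x j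

/-- A residual Kolmogorov–Arnold network from `ℝ^d` to `ℝ^D` with `L` hidden layers. -/
structure ResKAN (I d D : ℕ) where
  L : ℕ
  dims : ℕ → ℕ
  dims_zero : dims 0 = d
  layers : ∀ l : ℕ, ResKANLayer I (dims l) (dims (l + 1))
  Ahead : Matrix (Fin D) (Fin (dims L)) ℝ
  bhead : Fin D → ℝ

/-- The hidden state `f^{(l)}`. -/
def ResKAN.hidden {I d D : ℕ} (net : ResKAN I d D) :
    (l : ℕ) → (Fin d → ℝ) → Fin (net.dims l) → ℝ
  | 0 => fun x i => x (Fin.cast net.dims_zero i)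
  | (l + 1) => fun x => (net.layers l).apply (net.hidden l x)

/-- Evaluation of a Res-KAN: `f̂ = A^{(L+1)} f^{(L)} + b^{(L+1)}`. -/
def ResKAN.eval {I d D : ℕ} (net : ResKAN I d D) (x : Fin d → ℝ) : Fin D → ℝ :=
  net.Ahead.mulVec (net.hidden net.L x) + net.bhead

/-- Depth of a Res-KAN: the number of hidden layers. -/
def ResKAN.depth {I d D : ℕ} (net : ResKAN I d D) : ℕ := net.L

/-- Width of a Res-KAN: the maximum of the layer dimensions `d_1, …, d_L` and `d_{L+1} = D`. -/
def ResKAN.width {I d D : ℕ} (net : ResKAN I d D) : ℕ :=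
  max ((Finset.range net.L).sup fun l => net.dims (l + 1)) D

/-- Number of nonzero entries of a real matrix. -/
def matNnz {m n : ℕ} (M : Matrix (Fin m) (Fin n) ℝ) : ℕ :=
  {p : Fin m × Fin n | M p.1 p.2 ≠ 0}.ncard

/-- Number of nonzero entries of a real vector. -/
def vecNnz {m : ℕ} (v : Fin m → ℝ) : ℕ := {i : Fin m | v i ≠ 0}.ncard

/-- Number of nonzero parameters of a Res-KAN layer. -/
def ResKANLayer.nnz {I din dout : ℕ} (ℓ : ResKANLayer I din dout) : ℕ :=
  matNnz ℓ.A + vecNnz ℓ.b + matNnz ℓ.G + matNnz ℓ.β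

/-- Number of nonzero parameters of a Res-KAN. -/
def ResKAN.nnz {I d D : ℕ} (net : ResKAN I d D) : ℕ :=
  (∑ l ∈ Finset.range net.L, (net.layers l).nnz) + matNnz net.Ahead + vecNnz net.bhead

/-- The sparsity rule for smoothness parameter `α`: the coefficients of the B-splines of
order `< ⌈α⌉` vanish. -/
def ResKANLayer.Sparsity {I din dout : ℕ} (ℓ : ResKANLayer I din dout) (α : ℝ) : Prop :=
  ∀ (i : Fin (I + 3)) (j : Fin dout), (i : ℕ) ≤ I → (i : ℕ) < ⌈α⌉₊ → ℓ.β i j = 0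

/-- The sparsity rule for a whole network. -/
def ResKAN.Sparsity {I d D : ℕ} (net : ResKAN I d D) (α : ℝ) : Prop :=
  ∀ l < net.L, (net.layers l).Sparsity α

/-- The class `Res-KAN_{L,W}^{I,α}(ℝ^d, ℝ)` of real-valued Res-KANs with `L` hidden layers
and width at most `W`, satisfying the sparsity rule for `α`. -/
def ResKANClass (I : ℕ) (α : ℝ) (L W d : ℕ) : Set ((Fin d → ℝ) → ℝ) :=
  {f | ∃ net : ResKAN I d 1, net.L = L ∧ net.width ≤ W ∧ net.Sparsity α ∧
        ∀ x, f x = net.eval x 0}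

end

section ParameterCount

theorem hammingNorm_append {α : Type*} [Zero α] [DecidableEq α] {m n : ℕ}
    (u : Fin m → α) (v : Fin n → α) :
    hammingNorm (Fin.append u v) = hammingNorm u + hammingNorm v := by
  simp only [hammingNorm, Finset.card_filter, Fin.sum_univ_add, Fin.append_left, Fin.append_right]

theorem hammingNorm_single {ι α : Type*} [Fintype ι] [DecidableEq ι] [Zero α] [DecidableEq α]
    (i : ι) (a : α) : hammingNorm (Pi.single i a : ι → α) = if a ≠ 0 then 1 else 0 := by
  rcases eq_or_ne a 0 with rfl | ha
  · simp
  · simp [hammingNorm, Pi.single_apply, ha, Finset.filter_eq']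

theorem hammingNorm_add_le {ι α : Type*} [Fintype ι] [AddGroup α] [DecidableEq α]
    (u v : ι → α) : hammingNorm (u + v) ≤ hammingNorm u + hammingNorm v :=
  calc
    hammingNorm (u + v) = hammingDist (-u) v := by rw [hammingDist_eq_hammingNorm, neg_neg]
    _ ≤ hammingDist (-u) 0 + hammingDist 0 v := hammingDist_triangle _ _ _
    _ = hammingNorm u + hammingNorm v := by
      simp only [hammingDist_zero_left, hammingDist_zero_right, hammingNorm, Pi.neg_apply,
        neg_ne_zero]

theorem hammingNorm_lt_card {ι α : Type*} [Fintype ι] [Zero α] [DecidableEq α] {v : ι → α} {i : ι}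
    (hi : v i = 0) : hammingNorm v < Fintype.card ι :=
  Finset.card_lt_univ_of_notMem (x := i) (by simpa using hi)

variable {m n : ℕ}

theorem hammingNorm_le_dim (v : Fin n → ℝ) : hammingNorm v ≤ n := by
  simpa using hammingNorm_le_card_fintype (x := v)

theorem vecNnz_eq_hammingNorm (v : Fin m → ℝ) : vecNnz v = hammingNorm v := by
  rw [vecNnz, hammingNorm, ← Set.ncard_coe_finset, Finset.coe_filter_univ]

theorem matNnz_eq_sum_hammingNorm (M : Matrix (Fin m) (Fin n) ℝ) :
    matNnz M = ∑ i, hammingNorm (M i) := by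
  simp only [hammingNorm, Finset.card_filter]
  rw [← Fintype.sum_prod_type' (f := fun i j => if M i j ≠ 0 then 1 else 0), ← Finset.card_filter,
    matNnz, ← Set.ncard_coe_finset, Finset.coe_filter_univ]

theorem matNnz_zero : matNnz (0 : Matrix (Fin m) (Fin n) ℝ) = 0 := by
  simp [matNnz]

theorem vecNnz_zero : vecNnz (0 : Fin m → ℝ) = 0 := by
  simp [vecNnz]

theorem matNnz_le_of_hammingNorm_row_le {M : Matrix (Fin m) (Fin n) ℝ} {k : ℕ}
    (hM : ∀ i, hammingNorm (M i) ≤ k) : matNnz M ≤ m * k := by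
  rw [matNnz_eq_sum_hammingNorm]
  simpa using Finset.sum_le_card_nsmul Finset.univ _ k fun i _ => hM i

theorem matNnz_append {k : ℕ} (M : Fin m → Fin k → ℝ) (N : Fin n → Fin k → ℝ) :
    matNnz (Matrix.of (Fin.append M N)) = matNnz (Matrix.of M) + matNnz (Matrix.of N) := by
  rw [matNnz_eq_sum_hammingNorm, matNnz_eq_sum_hammingNorm, matNnz_eq_sum_hammingNorm,
    Fin.sum_univ_add]
  congr! 3
  · exact Fin.append_left ..
  · exact Fin.append_right ..

theorem matNnz_diagonal (v : Fin n → ℝ) : matNnz (Matrix.diagonal v) = hammingNorm v := by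
  have row (i : Fin n) : Matrix.diagonal v i = Pi.single i (v i) := Matrix.row_diagonal v i
  simp only [matNnz_eq_sum_hammingNorm, row, hammingNorm_single]
  rw [hammingNorm, Finset.card_filter]

theorem matNnz_updateRow_zero (i : Fin m) (v : Fin n → ℝ) :
    matNnz (Matrix.updateRow 0 i v) = hammingNorm v := by
  rw [matNnz_eq_sum_hammingNorm, Finset.sum_eq_single i]
  · rw [Matrix.updateRow_self]
  · intro j _ hj
    rw [Matrix.updateRow_ne hj]
    exact hammingNorm_zero
  · simp

end ParameterCount

section Activation

theorem relu_sq_add_relu_neg_sq (t : ℝ) : relu t ^ 2 + relu (-t) ^ 2 = t ^ 2 := by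
  rcases le_total 0 t with ht | ht <;> simp [relu, ht]

variable {I din dout : ℕ}

theorem kanBasis_last (t : ℝ) : kanBasis I (Fin.last (I + 2)) t = relu t ^ 2 := by
  simp [kanBasis]

theorem ResKANLayer.apply_of_β_eq_updateRow (ℓ : ResKANLayer I din dout) {m : Fin (I + 3)}
    {s : Fin dout → ℝ} (hβ : ℓ.β = Matrix.updateRow 0 m s) (x : Fin din → ℝ) (i : Fin dout) :
    ℓ.apply x i = s i * kanBasis I m ((ℓ.A.mulVec x + ℓ.b) i) + ℓ.G.mulVec x i := by
  simp [ResKANLayer.apply, hβ, Matrix.updateRow_apply]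

end Activation

/-- Signs with which the four accumulator coordinates of a hidden state sum to the partial
product. -/
def accSign : Fin 4 → ℝ := ![1, 1, -1, -1]

/-- Coefficients of the partial product `p` in the four preactivations `p + y`, `-p - y`, `p - y`,
`-p + y` of a multiplication by the factor `y`. -/
def prodCoeff : Fin 4 → ℝ := ![1, -1, 1, -1]

/-- Coefficients of the factor `y` in the same four preactivations. -/
def factorCoeff : Fin 4 → ℝ := ![1, -1, -1, 1]

theorem accSign_dotProduct_relu_sq (p y : ℝ) :
    accSign ⬝ᵥ (fun q => 1 / 4 * relu (prodCoeff q * p + factorCoeff q * y) ^ 2) = p * y := by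
  calc
    _ = 1 / 4 * (relu (p + y) ^ 2 + relu (-(p + y)) ^ 2)
        - 1 / 4 * (relu (p - y) ^ 2 + relu (-(p - y)) ^ 2) := by
      have neg_plus : -(p + y) = -p + -y := neg_add p y
      have neg_minus : -(p - y) = -p + y := by ring
      rw [neg_plus, neg_minus, sub_eq_add_neg p y]
      simp only [dotProduct, Fin.sum_univ_four, accSign, prodCoeff, factorCoeff,
        Matrix.cons_val, one_mul, neg_one_mul]
      ring
    _ = p * y := by
      rw [relu_sq_add_relu_neg_sq, relu_sq_add_relu_neg_sq]
      ring

/-- Coefficient vector of the linear functional reading the partial product off a hidden state.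
States consist of `n` factor coordinates followed by the four accumulator coordinates. -/
def accFunctional (n : ℕ) : Fin (n + 4) → ℝ := Fin.append 0 accSign

/-- Invariant of the hidden states: `h` encodes the partial product `p` in its accumulator and still
stores the factors `y i` with `l ≤ i`. The other factor coordinates are unconstrained. -/
structure EncodesProduct {n : ℕ} (y : Fin n → ℝ) (l : ℕ) (p : ℝ) (h : Fin (n + 4) → ℝ) :
    Prop where
  pending : ∀ i : Fin n, l ≤ i → h (Fin.castAdd 4 i) = y i
  acc : accFunctional n ⬝ᵥ h = p

/-- The state vector storing the first `n` entries of `v` as pending factors and the last one as the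
initial partial product. With rows for entries it also describes the first weight matrix. -/
def seedState {α : Type*} [Zero α] {n : ℕ} (v : Fin (n + 1) → α) : Fin (n + 4) → α :=
  Fin.append (Fin.init v) (Pi.single 0 (v (Fin.last n)))

/-- The first layer: it evaluates the factors `kanBasis I m (w i * x i + c i)`. -/
def inputLayer {I n : ℕ} (m : Fin (I + 3)) (w c : Fin (n + 1) → ℝ) :
    ResKANLayer I (n + 1) (n + 4) where
  A := Matrix.of (seedState (Matrix.diagonal w))
  b := seedState c
  G := 0
  β := Matrix.updateRow 0 m (seedState 1)
  G_diag _ _ _ := rfl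

/-- The layer multiplying the partial product by the factor stored in coordinate `l`. Its skip
connections keep only the later factors. -/
noncomputable def mulLayer (I : ℕ) {n : ℕ} (l : Fin n) : ResKANLayer I (n + 4) (n + 4) where
  A := Matrix.of (Fin.append 0 fun q =>
    prodCoeff q • accFunctional n + factorCoeff q • Pi.single (Fin.castAdd 4 l) 1)
  b := 0
  G := Matrix.diagonal (Fin.append (fun i => if l < i then 1 else 0) 0)
  β := Matrix.updateRow 0 (Fin.last (I + 2)) (Fin.append 0 fun _ => 1 / 4)
  G_diag _ _ hij := Matrix.diagonal_apply_ne _ fun e => hij (congrArg _ e)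

/-- A layer copying the accumulator, which pads the network to the prescribed depth. -/
def idleLayer (I n : ℕ) : ResKANLayer I (n + 4) (n + 4) where
  A := 0
  b := 0
  G := Matrix.diagonal (Fin.append 0 1)
  β := 0
  G_diag _ _ hij := Matrix.diagonal_apply_ne _ fun e => hij (congrArg _ e)

/-- Layer dimensions of `productNet`. -/
def productNetDims (n : ℕ) : ℕ → ℕ
  | 0 => n + 1
  | _ + 1 => n + 4

/-- The network computing `∏ i, kanBasis I m (w i * x i + c i)`: after the first layer, `n` layers
multiply by one factor each and `n` layers idle. -/
noncomputable def productNet {I n : ℕ} (m : Fin (I + 3)) (w c : Fin (n + 1) → ℝ) :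
    ResKAN I (n + 1) 1 where
  L := 2 * n + 1
  dims := productNetDims n
  dims_zero := rfl
  layers
    | 0 => inputLayer m w c
    | l + 1 => if h : l < n then mulLayer I ⟨l, h⟩ else idleLayer I n
  Ahead := Matrix.of fun _ => accFunctional n
  bhead := 0

section Layers

variable {I n : ℕ} (m : Fin (I + 3)) (w c : Fin (n + 1) → ℝ) {l : ℕ}

theorem productNet_layers_of_lt (hl : l < n) :
    (productNet m w c).layers (l + 1) = mulLayer I ⟨l, hl⟩ :=
  dif_pos hl

theorem productNet_layers_of_le (hl : n ≤ l) :
    (productNet m w c).layers (l + 1) = idleLayer I n :=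
  dif_neg hl.not_gt

end Layers

section Correctness

variable {I n : ℕ} (m : Fin (I + 3)) (w c x : Fin (n + 1) → ℝ)

theorem accFunctional_dotProduct (h : Fin (n + 4) → ℝ) :
    accFunctional n ⬝ᵥ h = accSign ⬝ᵥ fun q => h (Fin.natAdd n q) := by
  simp [accFunctional, dotProduct, Fin.sum_univ_add]

theorem apply_inputLayer :
    (inputLayer m w c).apply x = seedState fun i => kanBasis I m (w i * x i + c i) := by
  funext i
  rw [ResKANLayer.apply_of_β_eq_updateRow _ rfl]
  refine Fin.addCases (fun i => ?_) (fun q => ?_) i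
  · simp [inputLayer, seedState, Fin.init, Matrix.mulVec, diagonal_dotProduct]
  · rcases eq_or_ne q 0 with rfl | hq
    · simp [inputLayer, seedState, Matrix.mulVec, diagonal_dotProduct]
    · simp [inputLayer, seedState, hq]

theorem encodesProduct_seedState (z : Fin (n + 1) → ℝ) :
    EncodesProduct (Fin.init z) 0 (z (Fin.last n)) (seedState z) where
  pending i _ := Fin.append_left _ _ i
  acc := by simp [accFunctional_dotProduct, seedState, accSign]

theorem EncodesProduct.apply_mulLayer {y : Fin n → ℝ} {p : ℝ} {h : Fin (n + 4) → ℝ} {l : Fin n}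
    (hh : EncodesProduct y l p h) :
    EncodesProduct y (l + 1) (p * y l) ((mulLayer I l).apply h) where
  pending i hi := by
    rw [ResKANLayer.apply_of_β_eq_updateRow _ rfl]
    have hli : l < i := hi
    simp [mulLayer, Matrix.mulVec_diagonal, hli, hh.pending i hli.le]
  acc := by
    have preactivation (q : Fin 4) : (mulLayer I l).A.mulVec h (Fin.natAdd n q) =
        prodCoeff q * p + factorCoeff q * y l := by
      rw [← hh.acc, ← hh.pending l le_rfl]
      simp only [mulLayer, Matrix.mulVec, Matrix.of_apply, Fin.append_right, add_dotProduct,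
        smul_dotProduct, single_one_dotProduct, smul_eq_mul]
    have neuron (q : Fin 4) : (mulLayer I l).apply h (Fin.natAdd n q) =
        1 / 4 * relu (prodCoeff q * p + factorCoeff q * y l) ^ 2 := by
      rw [ResKANLayer.apply_of_β_eq_updateRow _ rfl, Pi.add_apply, preactivation]
      simp [mulLayer, Matrix.mulVec_diagonal, kanBasis_last]
    rw [accFunctional_dotProduct, funext neuron, accSign_dotProduct_relu_sq]

theorem EncodesProduct.apply_idleLayer {y : Fin n → ℝ} {p : ℝ} {h : Fin (n + 4) → ℝ}
    (hh : EncodesProduct y n p h) : EncodesProduct y n p ((idleLayer I n).apply h) where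
  pending i hi := absurd i.isLt hi.not_gt
  acc := by
    rw [← hh.acc, accFunctional_dotProduct, accFunctional_dotProduct]
    simp [ResKANLayer.apply, idleLayer, Matrix.mulVec_diagonal]

variable {m w c x}

theorem encodesProduct_hidden_of_le {y : Fin n → ℝ} {p : ℝ}
    (h₁ : EncodesProduct y 0 p ((productNet m w c).hidden 1 x)) (l : ℕ) (hl : l ≤ n) :
    EncodesProduct y l (p * ∏ i : Fin l, y (Fin.castLE hl i))
      ((productNet m w c).hidden (l + 1) x) := by
  induction l with
  | zero => simpa using h₁
  | succ l ih =>
    rw [Fin.prod_univ_castSucc, ← mul_assoc, ResKAN.hidden, productNet_layers_of_lt m w c hl]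
    exact EncodesProduct.apply_mulLayer (l := ⟨l, hl⟩) (ih (Nat.le_of_lt hl))

theorem encodesProduct_hidden_of_ge {y : Fin n → ℝ} {p : ℝ}
    (hn : EncodesProduct y n p ((productNet m w c).hidden (n + 1) x)) (l : ℕ) (hl : n ≤ l) :
    EncodesProduct y n p ((productNet m w c).hidden (l + 1) x) := by
  induction l, hl using Nat.le_induction with
  | base => exact hn
  | succ l hl ih =>
    rw [ResKAN.hidden, productNet_layers_of_le m w c hl]
    exact ih.apply_idleLayer

variable (m w c x)

theorem eval_productNet :
    (productNet m w c).eval x 0 = ∏ i, kanBasis I m (w i * x i + c i) := by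
  set z : Fin (n + 1) → ℝ := fun i => kanBasis I m (w i * x i + c i)
  have seeded : EncodesProduct (Fin.init z) 0 (z (Fin.last n)) ((productNet m w c).hidden 1 x) := by
    have hidden_one : (productNet m w c).hidden 1 x = seedState z := apply_inputLayer m w c x
    rw [hidden_one]
    exact encodesProduct_seedState z
  have multiplied := encodesProduct_hidden_of_le seeded n le_rfl
  have final := encodesProduct_hidden_of_ge multiplied (2 * n) (by omega)
  calc
    (productNet m w c).eval x 0
      = accFunctional n ⬝ᵥ (productNet m w c).hidden (2 * n + 1) x := add_zero _
    _ = z (Fin.last n) * ∏ i : Fin n, z i.castSucc := final.acc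
    _ = ∏ i, z i := by rw [Fin.prod_univ_castSucc, mul_comm]

end Correctness

section Size

variable {I n : ℕ} (m : Fin (I + 3)) (w c : Fin (n + 1) → ℝ)

theorem sum_seedState {α β : Type*} [Zero α] [AddCommMonoid β] {f : α → β} (hf : f 0 = 0)
    (v : Fin (n + 1) → α) : ∑ i, f (seedState v i) = ∑ i, f (v i) := by
  rw [Fin.sum_univ_add, Fin.sum_univ_castSucc fun i => f (v i)]
  simp [seedState, Fin.init, Fin.sum_univ_succ, hf]

theorem hammingNorm_seedState {α : Type*} [Zero α] [DecidableEq α] (v : Fin (n + 1) → α) :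
    hammingNorm (seedState v) = hammingNorm v := by
  simp only [hammingNorm, Finset.card_filter]
  exact sum_seedState (f := fun a => if a ≠ 0 then 1 else 0) (by simp) v

theorem matNnz_seedState {k : ℕ} (M : Matrix (Fin (n + 1)) (Fin k) ℝ) :
    matNnz (Matrix.of (seedState M)) = matNnz M := by
  rw [matNnz_eq_sum_hammingNorm, matNnz_eq_sum_hammingNorm]
  exact sum_seedState hammingNorm_zero M

theorem matNnz_A_add_vecNnz_b_inputLayer_le :
    matNnz (inputLayer m w c).A + vecNnz (inputLayer m w c).b ≤ 2 * (n + 1) := by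
  have hA : matNnz (inputLayer m w c).A ≤ n + 1 := by
    rw [inputLayer, matNnz_seedState, matNnz_diagonal]
    exact hammingNorm_le_dim w
  have hb : vecNnz (inputLayer m w c).b ≤ n + 1 := by
    rw [inputLayer, vecNnz_eq_hammingNorm, hammingNorm_seedState]
    exact hammingNorm_le_dim c
  omega

theorem nnz_inputLayer_le : (inputLayer m w c).nnz ≤ 3 * (n + 1) := by
  have hAb := matNnz_A_add_vecNnz_b_inputLayer_le m w c
  have hG : matNnz (inputLayer m w c).G = 0 := matNnz_zero
  have hβ : matNnz (inputLayer m w c).β ≤ n + 1 := by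
    rw [inputLayer, matNnz_updateRow_zero, hammingNorm_seedState]
    exact hammingNorm_le_dim 1
  rw [ResKANLayer.nnz]
  omega

theorem hammingNorm_accFunctional_le : hammingNorm (accFunctional n) ≤ 4 := by
  rw [accFunctional, hammingNorm_append, hammingNorm_zero, zero_add]
  exact hammingNorm_le_dim accSign

theorem hammingNorm_mulLayer_row_le (l : Fin n) (q : Fin 4) :
    hammingNorm (prodCoeff q • accFunctional n +
      factorCoeff q • (Pi.single (Fin.castAdd 4 l) 1 : Fin (n + 4) → ℝ)) ≤ 5 :=
  calc
    _ ≤ hammingNorm (prodCoeff q • accFunctional n) +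
        hammingNorm (factorCoeff q • (Pi.single (Fin.castAdd 4 l) 1 : Fin (n + 4) → ℝ)) :=
      hammingNorm_add_le _ _
    _ ≤ hammingNorm (accFunctional n) +
        hammingNorm (Pi.single (Fin.castAdd 4 l) 1 : Fin (n + 4) → ℝ) :=
      add_le_add hammingNorm_smul_le_hammingNorm hammingNorm_smul_le_hammingNorm
    _ ≤ 4 + 1 := by
      rw [hammingNorm_single, if_pos one_ne_zero]
      exact Nat.add_le_add_right hammingNorm_accFunctional_le 1

theorem nnz_mulLayer_le (l : Fin n) : (mulLayer I l).nnz ≤ n + 23 := by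
  have hA : matNnz (mulLayer I l).A ≤ 4 * 5 := by
    have pendingRows_eq : matNnz (Matrix.of (0 : Fin n → Fin (n + 4) → ℝ)) = 0 := matNnz_zero
    rw [mulLayer, matNnz_append, pendingRows_eq, zero_add]
    exact matNnz_le_of_hammingNorm_row_le (hammingNorm_mulLayer_row_le l)
  have hb : vecNnz (mulLayer I l).b = 0 := vecNnz_zero
  have hG : matNnz (mulLayer I l).G ≤ n - 1 := by
    rw [mulLayer, matNnz_diagonal, hammingNorm_append, hammingNorm_zero, add_zero]
    have erased : hammingNorm (fun i => if l < i then (1 : ℝ) else 0) < n := by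
      simpa only [Fintype.card_fin] using
        hammingNorm_lt_card (v := fun i => if l < i then (1 : ℝ) else 0) (if_neg (lt_irrefl l))
    exact Nat.le_sub_one_of_lt erased
  have hβ : matNnz (mulLayer I l).β ≤ 4 := by
    rw [mulLayer, matNnz_updateRow_zero, hammingNorm_append, hammingNorm_zero, zero_add]
    exact hammingNorm_le_dim _
  have hn := l.pos
  rw [ResKANLayer.nnz]
  omega

theorem nnz_idleLayer_le : (idleLayer I n).nnz ≤ 4 := by
  have hG : matNnz (idleLayer I n).G ≤ 4 := by
    rw [idleLayer, matNnz_diagonal, hammingNorm_append, hammingNorm_zero, zero_add]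
    exact hammingNorm_le_dim 1
  simpa [ResKANLayer.nnz, idleLayer, matNnz_zero, vecNnz_zero] using hG

theorem nnz_productNet_le : (productNet m w c).nnz ≤ n ^ 2 + 30 * n + 7 := by
  have mul_le (l : ℕ) (hl : l ∈ Finset.range n) :
      ((productNet m w c).layers (l + 1)).nnz ≤ n + 23 := by
    rw [productNet_layers_of_lt m w c (Finset.mem_range.1 hl)]
    exact nnz_mulLayer_le _
  have idle_le (l : ℕ) (_ : l ∈ Finset.range n) :
      ((productNet m w c).layers (n + l + 1)).nnz ≤ 4 := by
    rw [productNet_layers_of_le m w c (Nat.le_add_right n l)]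
    exact nnz_idleLayer_le
  have head_le : matNnz (productNet m w c).Ahead ≤ 4 := by
    rw [matNnz_eq_sum_hammingNorm, Fin.sum_univ_one]
    exact hammingNorm_accFunctional_le
  have bias_eq : vecNnz (productNet m w c).bhead = 0 := vecNnz_zero
  calc
    (productNet m w c).nnz
      = ∑ l ∈ Finset.range n, ((productNet m w c).layers (l + 1)).nnz +
          ∑ l ∈ Finset.range n, ((productNet m w c).layers (n + l + 1)).nnz +
          (inputLayer m w c).nnz + matNnz (productNet m w c).Ahead := by
      have layers_split : ∑ l ∈ Finset.range (2 * n + 1), ((productNet m w c).layers l).nnz =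
          ∑ l ∈ Finset.range n, ((productNet m w c).layers (l + 1)).nnz +
            ∑ l ∈ Finset.range n, ((productNet m w c).layers (n + l + 1)).nnz +
            (inputLayer m w c).nnz := by
        rw [two_mul, Finset.sum_range_succ', Finset.sum_range_add]
        rfl
      rw [← layers_split, ResKAN.nnz, bias_eq, add_zero]
      rfl
    _ ≤ n * (n + 23) + n * 4 + 3 * (n + 1) + 4 := by
      gcongr
      · simpa using Finset.sum_le_card_nsmul _ _ _ mul_le
      · simpa using Finset.sum_le_card_nsmul _ _ _ idle_le
      · exact nnz_inputLayer_le m w c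
    _ = n ^ 2 + 30 * n + 7 := by ring

theorem width_productNet_le : (productNet m w c).width ≤ n + 4 :=
  max_le (Finset.sup_le fun _ _ => le_rfl) (by omega)

theorem ResKANLayer.sparsity_of_β_eq_updateRow {din dout : ℕ} {ℓ : ResKANLayer I din dout}
    {m : Fin (I + 3)} {s : Fin dout → ℝ} (hβ : ℓ.β = Matrix.updateRow 0 m s) {α : ℝ}
    (hα : (m : ℕ) ≤ I → ⌈α⌉₊ ≤ m) : ℓ.Sparsity α := by
  intro i j hiI hiα
  have him : i ≠ m := by
    rintro rfl
    exact (hα hiI).not_gt hiα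
  rw [hβ, Matrix.updateRow_ne him]
  rfl

theorem sparsity_productNet {α : ℝ} (hα : ⌈α⌉₊ ≤ m) : (productNet m w c).Sparsity α := by
  rintro (_ | l) _
  · exact ResKANLayer.sparsity_of_β_eq_updateRow rfl fun _ => hα
  · rcases lt_or_ge l n with hl | hl
    · rw [productNet_layers_of_lt m w c hl]
      exact ResKANLayer.sparsity_of_β_eq_updateRow rfl fun hI => absurd hI (by simp)
    · rw [productNet_layers_of_le m w c hl]
      exact fun _ _ _ _ => rfl

end Size

theorem statement1_general (I : ℕ) (m : Fin (I + 3)) (d : ℕ) (hd : 2 ≤ d) :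
    ∃ (dims : ℕ → ℕ) (lay : ∀ l : ℕ, ResKANLayer I (dims l) (dims (l + 1)))
      (Ah : Matrix (Fin 1) (Fin (dims (2 * d - 1))) ℝ) (bh : Fin 1 → ℝ),
      ∀ w c : Fin d → ℝ,
        ∃ net : ResKAN I d 1,
          net.dims = dims ∧
          net.L = 2 * d - 1 ∧
          (∀ l : ℕ, 1 ≤ l → HEq (net.layers l) (lay l)) ∧
          HEq net.Ahead Ah ∧ net.bhead = bh ∧
          HEq (net.layers 0).G (lay 0).G ∧ HEq (net.layers 0).β (lay 0).β ∧
          matNnz (net.layers 0).A + vecNnz (net.layers 0).b ≤ 2 * d ∧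
          net.width ≤ d + 4 ∧
          net.depth = 2 * d - 1 ∧
          net.nnz ≤ d ^ 2 + 35 * d - 36 ∧
          (∀ α : ℝ, 0 < α → ⌈α⌉₊ ≤ m → net.Sparsity α) ∧
          ∀ x : Fin d → ℝ, net.eval x 0 = ∏ i, kanBasis I m (w i * x i + c i) := by
  obtain ⟨n, rfl⟩ : ∃ n, d = n + 1 := ⟨d - 1, by omega⟩
  refine ⟨productNetDims n, (productNet m 0 0).layers, (productNet (n := n) m 0 0).Ahead, 0,
    fun w c => ⟨productNet m w c, rfl, rfl, ?_, HEq.rfl, rfl, HEq.rfl, HEq.rfl,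
      matNnz_A_add_vecNnz_b_inputLayer_le m w c, (width_productNet_le m w c).trans (by omega), rfl,
      ?_, fun α _ hα => sparsity_productNet m w c hα, eval_productNet m w c⟩⟩
  · rintro (_ | l) hl
    · contradiction
    · exact HEq.rfl
  · have nnz_le := nnz_productNet_le m w c
    have bound : n ^ 2 + 30 * n + 7 + 36 ≤ (n + 1) ^ 2 + 35 * (n + 1) := by nlinarith
    omega

/-- Multi-dimensional cardinal B-spline implementation.
For `I, k ≥ 1`, `d ≥ 2` and `j ∈ ℤ^d`, there is a Res-KAN with spline-order parameter `I`
(satisfying the sparsity rule for every `α > 0` with `⌈α⌉ ≤ I`), of width at most `d + 4`,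
depth `2d - 1`, and at most `d² + 35d - 36` nonzero parameters, exactly implementing
`x ↦ ∏ i, 𝒩_I(2^k x_i − j_i)` on all of `ℝ^d`.  Moreover, the networks can be chosen so
that every layer parameter other than the first affine map's weight matrix and bias
(which have at most `2d` nonzero entries) is independent of `k` and `j`. -/
theorem statement1 (I : ℕ) (hI : 1 ≤ I) (d : ℕ) (hd : 2 ≤ d) :
    ∃ (dims : ℕ → ℕ) (lay : ∀ l : ℕ, ResKANLayer I (dims l) (dims (l + 1)))
      (Ah : Matrix (Fin 1) (Fin (dims (2 * d - 1))) ℝ) (bh : Fin 1 → ℝ),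
      ∀ k : ℕ, 1 ≤ k → ∀ j : Fin d → ℤ,
        ∃ net : ResKAN I d 1,
          net.dims = dims ∧
          net.L = 2 * d - 1 ∧
          -- all layers except the first one are independent of `k` and `j`
          (∀ l : ℕ, 1 ≤ l → HEq (net.layers l) (lay l)) ∧
          HEq net.Ahead Ah ∧ net.bhead = bh ∧
          -- in the first layer, only the affine weights `A` and bias `b` depend on `k, j`
          HEq (net.layers 0).G (lay 0).G ∧ HEq (net.layers 0).β (lay 0).β ∧
          matNnz (net.layers 0).A + vecNnz (net.layers 0).b ≤ 2 * d ∧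
          net.width ≤ d + 4 ∧
          net.depth = 2 * d - 1 ∧
          net.nnz ≤ d ^ 2 + 35 * d - 36 ∧
          (∀ α : ℝ, 0 < α → ⌈α⌉₊ ≤ I → net.Sparsity α) ∧
          ∀ x : Fin d → ℝ,
            net.eval x 0 = ∏ i, cardBSpline I ((2 : ℝ) ^ k * x i - (j i : ℝ)) := by
  obtain ⟨dims, lay, Ah, bh, h⟩ := statement1_general I ⟨I, by omega⟩ d hd
  exact ⟨dims, lay, Ah, bh, fun k _ j => by
    simpa only [kanBasis, le_refl, if_true, sub_eq_add_neg] using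
      h (fun _ => 2 ^ k) (fun i => -j i)⟩
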